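/- Let α : ℕ × ℕ → ℝ be nonnegative and monotone nonincreasing in each coordinate, and let κ₁, κ₂ : ℕ → ℝ be nonnegative with ∑_{j=0}^∞ κ₁(j) = 1 and ∑_{j=0}^∞ κ₂(j) = 1. Then for any k₁, k₂ ∈ ℕ, the double series S = ∑_{j₁,j₂ ≥ 0} α(j₁,j₂)·κ₁(j₁)·κ₂(j₂) converges and satisfies S ≤ ∑_{j₁<k₁, j₂<k₂} (α(j₁,j₂) − α(j₁,k₂) − α(k₁,j₂) + α(k₁,k₂))·κ₁(j₁)·κ₂(j₂) + ∑_{j₁<k₁} (α(j₁,k₂) − α(k₁,k₂))·κ₁(j₁) + ∑_{j₂<k₂} (α(k₁,j₂) − α(k₁,k₂))·κ₂(j₂) + α(k₁,k₂). -/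

import Mathlib

/-!
An antitone `α` satisfies `α p ≤ α (p ⊓ (k₁, k₂))`, and the right-hand side of the bound is exactly
the double series with `α` replaced by the truncation `p ↦ α (p ⊓ (k₁, k₂))`. To sum the truncated
series, split it by inclusion–exclusion around the corner value `α (k₁, k₂)`: what remains is a term
with finite support, two products in which one factor has finite support, and a constant multiple
of `κ₁ ⊗ κ₂`.
-/

section FiniteSupportFactor

variable {β γ R : Type*} [TopologicalSpace R]

theorem hasSum_prod_mul_of_fst_ne_finset_zero [NonUnitalNonAssocSemiring R]
    [IsTopologicalSemiring R] {f : β → R} {g : γ → R} {a : R} {t : Finset β}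
    (hf : ∀ b ∉ t, f b = 0) (hg : HasSum g a) :
    HasSum (fun p : β × γ ↦ f p.1 * g p.2) ((∑ b ∈ t, f b) * a) := by
  classical
  have row_hasSum (b : β) :
      HasSum (fun p : β × γ ↦ if p.1 = b then f b * g p.2 else 0) (f b * a) := by
    refine ((Prod.mk_right_injective b).hasSum_iff ?_).1 ?_
    · rintro ⟨b', c⟩ hp
      exact if_neg fun h ↦ hp ⟨c, Prod.ext h.symm rfl⟩
    · simpa [Function.comp_def] using hg.mul_left (f b)
  have rows_sum (p : β × γ) :
      (∑ b ∈ t, if p.1 = b then f b * g p.2 else 0) = f p.1 * g p.2 := by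
    rw [Finset.sum_ite_eq]
    split_ifs with hp
    · rfl
    · rw [hf _ hp, zero_mul]
  simpa only [rows_sum, ← Finset.sum_mul] using hasSum_sum fun b (_ : b ∈ t) ↦ row_hasSum b

theorem hasSum_prod_mul_of_snd_ne_finset_zero [NonUnitalNonAssocCommSemiring R]
    [IsTopologicalSemiring R] {f : β → R} {g : γ → R} {a : R} {t : Finset γ}
    (hf : HasSum f a) (hg : ∀ c ∉ t, g c = 0) :
    HasSum (fun p : β × γ ↦ f p.1 * g p.2) (a * ∑ c ∈ t, g c) := by
  simpa only [Function.comp_def, Equiv.prodComm_apply, Prod.fst_swap, Prod.snd_swap, mul_comm]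
    using (Equiv.prodComm β γ).hasSum_iff.2 (hasSum_prod_mul_of_fst_ne_finset_zero hg hf)

end FiniteSupportFactor

section Truncation

variable {R : Type*} [NonUnitalNonAssocRing R]

theorem comp_inf_sub_mul_eq_zero (g κ : ℕ → R) {k j : ℕ} (hj : j ∉ Finset.range k) :
    (g (j ⊓ k) - g k) * κ j = 0 := by
  rw [inf_eq_right.2 (by simpa using hj), sub_self, zero_mul]

theorem sum_range_comp_inf_sub_mul (g κ : ℕ → R) (k : ℕ) :
    ∑ j ∈ Finset.range k, (g (j ⊓ k) - g k) * κ j = ∑ j ∈ Finset.range k, (g j - g k) * κ j :=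
  Finset.sum_congr rfl fun j hj ↦ by rw [inf_eq_left.2 (Finset.mem_range.1 hj).le]

theorem hasSum_mixed_difference_comp_inf_mul_mul [TopologicalSpace R]
    (f : ℕ × ℕ → R) (κ₁ κ₂ : ℕ → R) (k₁ k₂ : ℕ) :
    HasSum (fun p : ℕ × ℕ ↦ (f (p.1 ⊓ k₁, p.2 ⊓ k₂) - f (p.1 ⊓ k₁, k₂) - f (k₁, p.2 ⊓ k₂)
        + f (k₁, k₂)) * κ₁ p.1 * κ₂ p.2)
      (∑ j₁ ∈ Finset.range k₁, ∑ j₂ ∈ Finset.range k₂,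
        (f (j₁, j₂) - f (j₁, k₂) - f (k₁, j₂) + f (k₁, k₂)) * κ₁ j₁ * κ₂ j₂) := by
  rw [← Finset.sum_product']
  convert hasSum_sum_of_ne_finset_zero (L := .unconditional _)
    (s := Finset.range k₁ ×ˢ Finset.range k₂) ?_ using 1
  · refine Finset.sum_congr rfl fun p hp ↦ ?_
    obtain ⟨h₁, h₂⟩ : p.1 < k₁ ∧ p.2 < k₂ := by simpa using hp
    rw [inf_eq_left.2 h₁.le, inf_eq_left.2 h₂.le]
  · intro p hp
    have outside : k₁ ≤ p.1 ∨ k₂ ≤ p.2 := by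
      simpa only [Finset.mem_product, Finset.mem_range, not_and_or, not_lt] using hp
    rcases outside with h | h <;> simp [inf_eq_right.2 h]

end Truncation

theorem hasSum_comp_inf_mul_mul {R : Type*} [CommRing R] [TopologicalSpace R]
    [IsTopologicalRing R] [T2Space R] (f : ℕ × ℕ → R)
    {κ₁ κ₂ : ℕ → R} {s₁ s₂ : R} (hκ₁ : HasSum κ₁ s₁) (hκ₂ : HasSum κ₂ s₂)
    (hκ : Summable fun p : ℕ × ℕ ↦ κ₁ p.1 * κ₂ p.2) (k₁ k₂ : ℕ) :
    HasSum (fun p : ℕ × ℕ ↦ f (p ⊓ (k₁, k₂)) * κ₁ p.1 * κ₂ p.2)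
      ((∑ j₁ ∈ Finset.range k₁, ∑ j₂ ∈ Finset.range k₂,
          (f (j₁, j₂) - f (j₁, k₂) - f (k₁, j₂) + f (k₁, k₂)) * κ₁ j₁ * κ₂ j₂)
        + (∑ j₁ ∈ Finset.range k₁, (f (j₁, k₂) - f (k₁, k₂)) * κ₁ j₁) * s₂
        + s₁ * (∑ j₂ ∈ Finset.range k₂, (f (k₁, j₂) - f (k₁, k₂)) * κ₂ j₂)
        + f (k₁, k₂) * (s₁ * s₂)) := by
  have corner := hasSum_mixed_difference_comp_inf_mul_mul f κ₁ κ₂ k₁ k₂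
  have edge₁ := hasSum_prod_mul_of_fst_ne_finset_zero
    (fun _ ↦ comp_inf_sub_mul_eq_zero (fun j ↦ f (j, k₂)) κ₁ (k := k₁)) hκ₂
  have edge₂ := hasSum_prod_mul_of_snd_ne_finset_zero hκ₁
    (fun _ ↦ comp_inf_sub_mul_eq_zero (fun j ↦ f (k₁, j)) κ₂ (k := k₂))
  have base := (hκ₁.mul hκ₂ hκ).mul_left (f (k₁, k₂))
  rw [sum_range_comp_inf_sub_mul (fun j ↦ f (j, k₂))] at edge₁
  rw [sum_range_comp_inf_sub_mul (fun j ↦ f (k₁, j))] at edge₂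
  have inclusion_exclusion (p : ℕ × ℕ) : f (p ⊓ (k₁, k₂)) * κ₁ p.1 * κ₂ p.2 =
      (f (p.1 ⊓ k₁, p.2 ⊓ k₂) - f (p.1 ⊓ k₁, k₂) - f (k₁, p.2 ⊓ k₂) + f (k₁, k₂))
          * κ₁ p.1 * κ₂ p.2
        + (f (p.1 ⊓ k₁, k₂) - f (k₁, k₂)) * κ₁ p.1 * κ₂ p.2
        + κ₁ p.1 * ((f (k₁, p.2 ⊓ k₂) - f (k₁, k₂)) * κ₂ p.2)
        + f (k₁, k₂) * (κ₁ p.1 * κ₂ p.2) := by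
    obtain ⟨j₁, j₂⟩ := p
    rw [Prod.mk_inf_mk]
    ring
  simpa only [inclusion_exclusion] using ((corner.add edge₁).add edge₂).add base

theorem truncated_double_sum_bound_general {α : ℕ × ℕ → ℝ} (hα0 : ∀ p, 0 ≤ α p)
    (hα : Antitone α) {κ₁ κ₂ : ℕ → ℝ} (hκ₁0 : ∀ j, 0 ≤ κ₁ j) (hκ₂0 : ∀ j, 0 ≤ κ₂ j)
    {s₁ s₂ : ℝ} (hκ₁ : HasSum κ₁ s₁) (hκ₂ : HasSum κ₂ s₂) (k₁ k₂ : ℕ) :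
    Summable (fun p : ℕ × ℕ ↦ α p * κ₁ p.1 * κ₂ p.2) ∧
    ∑' p : ℕ × ℕ, α p * κ₁ p.1 * κ₂ p.2 ≤
      (∑ j₁ ∈ Finset.range k₁, ∑ j₂ ∈ Finset.range k₂,
        (α (j₁, j₂) - α (j₁, k₂) - α (k₁, j₂) + α (k₁, k₂)) * κ₁ j₁ * κ₂ j₂)
      + (∑ j₁ ∈ Finset.range k₁, (α (j₁, k₂) - α (k₁, k₂)) * κ₁ j₁) * s₂
      + s₁ * (∑ j₂ ∈ Finset.range k₂, (α (k₁, j₂) - α (k₁, k₂)) * κ₂ j₂)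
      + α (k₁, k₂) * (s₁ * s₂) := by
  have truncated_hasSum := hasSum_comp_inf_mul_mul α hκ₁ hκ₂
    (hκ₁.summable.mul_of_nonneg hκ₂.summable hκ₁0 hκ₂0) k₁ k₂
  have le_truncated (p : ℕ × ℕ) :
      α p * κ₁ p.1 * κ₂ p.2 ≤ α (p ⊓ (k₁, k₂)) * κ₁ p.1 * κ₂ p.2 :=
    mul_le_mul_of_nonneg_right
      (mul_le_mul_of_nonneg_right (hα inf_le_left) (hκ₁0 _)) (hκ₂0 _)
  have weighted_summable : Summable fun p : ℕ × ℕ ↦ α p * κ₁ p.1 * κ₂ p.2 :=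
    .of_nonneg_of_le (fun p ↦ mul_nonneg (mul_nonneg (hα0 p) (hκ₁0 _)) (hκ₂0 _))
      le_truncated truncated_hasSum.summable
  exact ⟨weighted_summable, hasSum_le le_truncated weighted_summable.hasSum truncated_hasSum⟩

theorem truncated_double_sum_bound (α : ℕ × ℕ → ℝ)
    (hα0 : ∀ p : ℕ × ℕ, 0 ≤ α p)
    (hmono1 : ∀ j₁ j₁' j₂ : ℕ, j₁ ≤ j₁' → α (j₁', j₂) ≤ α (j₁, j₂))
    (hmono2 : ∀ j₁ j₂ j₂' : ℕ, j₂ ≤ j₂' → α (j₁, j₂') ≤ α (j₁, j₂))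
    (κ₁ κ₂ : ℕ → ℝ) (hκ₁0 : ∀ j, 0 ≤ κ₁ j) (hκ₂0 : ∀ j, 0 ≤ κ₂ j)
    (hκ₁ : HasSum κ₁ 1) (hκ₂ : HasSum κ₂ 1) (k₁ k₂ : ℕ) :
    Summable (fun p : ℕ × ℕ => α p * κ₁ p.1 * κ₂ p.2) ∧
    ∑' p : ℕ × ℕ, α p * κ₁ p.1 * κ₂ p.2 ≤
      (∑ j₁ ∈ Finset.range k₁, ∑ j₂ ∈ Finset.range k₂,
        (α (j₁, j₂) - α (j₁, k₂) - α (k₁, j₂) + α (k₁, k₂)) * κ₁ j₁ * κ₂ j₂)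
      + (∑ j₁ ∈ Finset.range k₁, (α (j₁, k₂) - α (k₁, k₂)) * κ₁ j₁)
      + (∑ j₂ ∈ Finset.range k₂, (α (k₁, j₂) - α (k₁, k₂)) * κ₂ j₂)
      + α (k₁, k₂) := by
  simpa only [mul_one, one_mul] using truncated_double_sum_bound_general hα0
    (antitone_prod_iff.2 ⟨fun j₁ _ _ ↦ hmono2 j₁ _ _, fun j₂ _ _ ↦ hmono1 _ _ j₂⟩)
    hκ₁0 hκ₂0 hκ₁ hκ₂ k₁ k₂
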